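/- In the thermodynamic limit the quenched pressure of the Viana–Bray model satisfies A(α) = ln 2 + ψ(α,α) − α A′(α). Precisely: fix β > 0 and α > 0, and assume (i) the limit A(α′) = lim_{N→∞} A_N(α′) exists for all α′ in a neighborhood of α and A is differentiable at α; (ii) lim_{N→∞} N·(A_N(α(1+1/N)) − A_N(α)) = α A′(α); (iii) the limit ψ(α′,α) = lim_{N→∞} ψ_N(α′,α) exists for all α′ in a neighborhood of α and is continuous in α′ at α′ = α. Then A(α) = ln 2 + ψ(α,α) − α A′(α). -/

import Mathlib

noncomputable section

/-- The real value of a Boolean spin: `true ↦ 1`, `false ↦ -1`. -/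
def spin (b : Bool) : ℝ := if b then 1 else -1

/-- Minus `β` times the Viana–Bray Hamiltonian with `p` interaction terms:
`-β H = β ∑_{ν<p} J_ν σ_{i_ν} σ_{j_ν}`. -/
def negBetaH (N p : ℕ) (β : ℝ) (i j : Fin p → Fin N) (J : Fin p → Bool)
    (σ : Fin N → Bool) : ℝ :=
  β * ∑ ν : Fin p, spin (J ν) * spin (σ (i ν)) * spin (σ (j ν))

/-- The partition function `Z = ∑_σ exp (-β H(σ))`. -/
def partitionZ (N p : ℕ) (β : ℝ) (i j : Fin p → Fin N) (J : Fin p → Bool) : ℝ :=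
  ∑ σ : Fin N → Bool, Real.exp (negBetaH N p β i j J σ)

/-- Quenched expectation over the interaction randomness: the number `p` of interaction
terms is Poisson of mean `lam`, and the index families `i, j : Fin p → Fin N` and sign
family `J : Fin p → Bool` are i.i.d. uniform. -/
def quenchedAvg (N : ℕ) (lam : ℝ)
    (g : (p : ℕ) → (Fin p → Fin N) → (Fin p → Fin N) → (Fin p → Bool) → ℝ) : ℝ :=
  ∑' p : ℕ, (Real.exp (-lam) * lam ^ p / (Nat.factorial p : ℝ)) *
    ((∑ i : Fin p → Fin N, ∑ j : Fin p → Fin N, ∑ J : Fin p → Bool, g p i j J) /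
      ((N : ℝ) ^ p * (N : ℝ) ^ p * 2 ^ p))

/-- The quenched pressure `A_N(α) = (1/N) E ln Z` of the Viana–Bray model with Poisson
mean `α N`. -/
def pressure (N : ℕ) (β α : ℝ) : ℝ :=
  quenchedAvg N (α * N) fun p i j J => (1 / (N : ℝ)) * Real.log (partitionZ N p β i j J)

/-- Expectation over the cavity randomness: a Poisson (mean `lam`) number `q` of cavity
terms, with i.i.d. uniform indices `k : Fin q → Fin N` and signs `J' : Fin q → Bool`. -/
def cavityAvg (N : ℕ) (lam : ℝ)
    (g : (q : ℕ) → (Fin q → Fin N) → (Fin q → Bool) → ℝ) : ℝ :=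
  ∑' q : ℕ, (Real.exp (-lam) * lam ^ q / (Nat.factorial q : ℝ)) *
    ((∑ k : Fin q → Fin N, ∑ J' : Fin q → Bool, g q k J') / ((N : ℝ) ^ q * 2 ^ q))

/-- The cavity field `β ∑_{ν<q} J'_ν σ_{k_ν}`. -/
def cavityField (N q : ℕ) (β : ℝ) (k : Fin q → Fin N) (J' : Fin q → Bool)
    (σ : Fin N → Bool) : ℝ :=
  β * ∑ ν : Fin q, spin (J' ν) * spin (σ (k ν))

/-- The cavity function
`ψ_N(α', α) = E ln Ω exp (β ∑_{ν=1}^{P_{2α'}} J'_ν σ_{k_ν})`, where `Ω` is the Gibbs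
expectation of the Viana–Bray model at connectivity `α` and the cavity randomness (Poisson
of mean `2α'`) is independent of the quenched variables in `Ω`. -/
def cavityFun (N : ℕ) (β α' α : ℝ) : ℝ :=
  quenchedAvg N (α * N) fun p i j J =>
    cavityAvg N (2 * α') fun q k J' =>
      Real.log ((∑ σ : Fin N → Bool,
        Real.exp (negBetaH N p β i j J σ + cavityField N q β k J' σ)) /
          partitionZ N p β i j J)

section ExponentialSeries

open scoped Nat

variable {R : Type*} [CommRing R] [Algebra ℝ R]

/-- The value of a linear functional on the exponential series of `u`. -/
def expEval (L : R →ₗ[ℝ] ℝ) (u : R) : ℝ := ∑' n : ℕ, (n ! : ℝ)⁻¹ * L (u ^ n)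

/-- A linear functional that is bounded by a submultiplicative gauge. -/
def IsDominated (L : R →ₗ[ℝ] ℝ) : Prop :=
  ∃ (ν : R → ℝ) (K : ℝ), (∀ u, 0 ≤ ν u) ∧ ν 1 ≤ 1 ∧ (∀ u v, ν (u * v) ≤ ν u * ν v) ∧
    0 ≤ K ∧ ∀ u, |L u| ≤ K * ν u

lemma summable_inv_factorial_mul_pow (x : ℝ) : Summable fun n : ℕ => (n ! : ℝ)⁻¹ * x ^ n := by
  simpa [div_eq_inv_mul] using Real.summable_pow_div_factorial x

lemma tsum_inv_factorial_mul_pow (x : ℝ) : ∑' n : ℕ, (n ! : ℝ)⁻¹ * x ^ n = Real.exp x := by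
  rw [Real.exp_eq_exp_ℝ]
  simpa [div_eq_inv_mul] using (NormedSpace.expSeries_div_hasSum_exp (x : ℝ)).tsum_eq

namespace IsDominated

variable {L : R →ₗ[ℝ] ℝ}

lemma exists_bound (hL : IsDominated L) (u v : R) :
    ∃ K a b : ℝ, 0 ≤ a ∧ 0 ≤ b ∧ ∀ k l : ℕ, |L (u ^ k * v ^ l)| ≤ K * (a ^ k * b ^ l) := by
  obtain ⟨ν, K, h0, h1, hm, hK, hL⟩ := hL
  have hp : ∀ u : R, ∀ n : ℕ, ν (u ^ n) ≤ ν u ^ n := by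
    intro u n
    induction n with
    | zero => simpa using h1
    | succ n ih =>
      rw [pow_succ, pow_succ]
      exact (hm _ _).trans (mul_le_mul_of_nonneg_right ih (h0 _))
  refine ⟨K, ν u, ν v, h0 _, h0 _, fun k l => (hL _).trans ?_⟩
  refine mul_le_mul_of_nonneg_left ((hm _ _).trans ?_) hK
  exact mul_le_mul (hp _ _) (hp _ _) (h0 _) (pow_nonneg (h0 _) _)

lemma summable_prod (hL : IsDominated L) (u v : R) :
    Summable fun p : ℕ × ℕ => (p.1 ! : ℝ)⁻¹ * ((p.2 ! : ℝ)⁻¹ * L (u ^ p.1 * v ^ p.2)) := by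
  obtain ⟨K, a, b, ha, hb, h⟩ := hL.exists_bound u v
  have hs := ((summable_inv_factorial_mul_pow a).mul_of_nonneg
    (summable_inv_factorial_mul_pow b) (fun _ => by positivity) (fun _ => by positivity)).mul_left K
  refine Summable.of_norm_bounded hs fun p => ?_
  rw [Real.norm_eq_abs, abs_mul, abs_mul, abs_of_nonneg (by positivity),
    abs_of_nonneg (by positivity)]
  calc _ ≤ (p.1 ! : ℝ)⁻¹ * ((p.2 ! : ℝ)⁻¹ * (K * (a ^ p.1 * b ^ p.2))) := by
        gcongr
        exact h _ _
    _ = _ := by ring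

lemma summable (hL : IsDominated L) (u : R) : Summable fun n : ℕ => (n ! : ℝ)⁻¹ * L (u ^ n) := by
  obtain ⟨K, a, b, ha, hb, h⟩ := hL.exists_bound u 1
  refine Summable.of_norm_bounded ((summable_inv_factorial_mul_pow a).mul_left K) fun n => ?_
  rw [Real.norm_eq_abs, abs_mul, abs_of_nonneg (by positivity)]
  calc _ ≤ (n ! : ℝ)⁻¹ * (K * a ^ n) := by
        gcongr
        simpa using h n 0
    _ = _ := by ring

lemma comp_mulLeft (hL : IsDominated L) (a : R) :
    IsDominated (L ∘ₗ LinearMap.mulLeft ℝ a) := by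
  obtain ⟨ν, K, h0, h1, hm, hK, hL⟩ := hL
  refine ⟨ν, K * ν a, h0, h1, hm, mul_nonneg hK (h0 _), fun u => (hL _).trans ?_⟩
  rw [mul_assoc]
  exact mul_le_mul_of_nonneg_left (hm _ _) hK

lemma hasSum_expEval_add (hL : IsDominated L) (u v : R) :
    HasSum (fun k : ℕ => (k ! : ℝ)⁻¹ * expEval (L ∘ₗ LinearMap.mulLeft ℝ (u ^ k)) v)
      (expEval L (u + v)) := by
  have hs := hL.summable_prod u v
  have h1 : ∀ k : ℕ, ∑' l : ℕ, (k ! : ℝ)⁻¹ * ((l ! : ℝ)⁻¹ * L (u ^ k * v ^ l)) =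
      (k ! : ℝ)⁻¹ * expEval (L ∘ₗ LinearMap.mulLeft ℝ (u ^ k)) v := fun k => tsum_mul_left
  have h2 : ∑' p : ℕ × ℕ, (p.1 ! : ℝ)⁻¹ * ((p.2 ! : ℝ)⁻¹ * L (u ^ p.1 * v ^ p.2)) =
      expEval L (u + v) := by
    rw [← Finset.HasAntidiagonal.sigmaAntidiagonalEquivProd.tsum_eq (_ : ℕ × ℕ → ℝ)]
    refine Eq.trans (Summable.tsum_sigma'
      (f := (fun p : ℕ × ℕ => (p.1 ! : ℝ)⁻¹ * ((p.2 ! : ℝ)⁻¹ * L (u ^ p.1 * v ^ p.2))) ∘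
        Finset.HasAntidiagonal.sigmaAntidiagonalEquivProd)
      (fun n => (hasSum_fintype _).summable)
      (Finset.HasAntidiagonal.sigmaAntidiagonalEquivProd.summable_iff.mpr hs)) ?_
    refine tsum_congr fun n => ?_
    rw [tsum_fintype, (Commute.all u v).add_pow', map_sum, Finset.mul_sum]
    refine Eq.trans (Finset.sum_coe_sort (Finset.HasAntidiagonal.antidiagonal n)
      (fun p => (p.1 ! : ℝ)⁻¹ * ((p.2 ! : ℝ)⁻¹ * L (u ^ p.1 * v ^ p.2)))) ?_
    refine Finset.sum_congr rfl fun p hp => ?_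
    rw [Finset.HasAntidiagonal.mem_antidiagonal] at hp
    subst hp
    rw [map_nsmul, nsmul_eq_mul, Nat.cast_add_choose]
    have := Nat.factorial_ne_zero (p.1 + p.2)
    have := Nat.factorial_ne_zero p.1
    have := Nat.factorial_ne_zero p.2
    field_simp
  simpa only [h1, h2] using
    hs.hasSum.prod_fiberwise (fun k => (hs.prod_factor k).hasSum)

lemma expEval_add_smul_of_forall_mul_eq (hL : IsDominated L) (u w : R)
    (hw : ∀ a, L (a * w) = L a) (d : ℝ) :
    expEval L (u + d • w) = Real.exp d * expEval L u := by
  have hwn : ∀ (n : ℕ) (a : R), L (a * w ^ n) = L a := by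
    intro n
    induction n with
    | zero => simp
    | succ n ih =>
      intro a
      rw [pow_succ, ← mul_assoc, hw, ih]
  have h : ∀ a : R, expEval (L ∘ₗ LinearMap.mulLeft ℝ a) (d • w) = Real.exp d * L a := by
    intro a
    rw [← tsum_inv_factorial_mul_pow, ← tsum_mul_right, expEval]
    refine tsum_congr fun n => ?_
    simp [smul_pow, hwn, mul_assoc]
  rw [← (hL.hasSum_expEval_add u (d • w)).tsum_eq, expEval, ← tsum_mul_left]
  refine tsum_congr fun n => ?_
  rw [h]
  ring

end IsDominated

lemma abs_sub_le_two_pow_sub_one {f : ℕ → ℝ} {B : ℝ} (hf : ∀ n, |f (n + 1) - f n| ≤ B)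
    (k l : ℕ) : |f (k + l) - f k| ≤ B * (2 ^ l - 1) := by
  have hB : 0 ≤ B := (abs_nonneg _).trans (hf 0)
  induction l with
  | zero => simp
  | succ l ih =>
    have h1 : (1 : ℝ) ≤ 2 ^ l := one_le_pow₀ (by norm_num)
    calc |f (k + (l + 1)) - f k|
        = |(f (k + l + 1) - f (k + l)) + (f (k + l) - f k)| := by
          rw [← add_assoc]
          ring_nf
      _ ≤ B + B * (2 ^ l - 1) := (abs_add_le _ _).trans (add_le_add (hf _) ih)
      _ ≤ B * (2 ^ (l + 1) - 1) := by
          rw [pow_succ]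
          nlinarith

lemma IsDominated.abs_exp_mul_expEval_sub_le {L : R →ₗ[ℝ] ℝ} (hL : IsDominated L) (x : R) {B : ℝ}
    (hB : ∀ n : ℕ, |L (x ^ (n + 1)) - L (x ^ n)| ≤ B) {a d : ℝ} (ha : 0 ≤ a) (hd : 0 ≤ d) :
    |Real.exp (-(a + d)) * expEval L ((a + d) • x) - Real.exp (-a) * expEval L (a • x)| ≤
      B * (Real.exp d - 1) := by
  have hS := summable_inv_factorial_mul_pow
  have hT := tsum_inv_factorial_mul_pow
  have h1 := hL.hasSum_expEval_add (a • x) (d • x)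
  have h2 : HasSum (fun k : ℕ => Real.exp d * ((k ! : ℝ)⁻¹ * L ((a • x) ^ k)))
      (Real.exp d * expEval L (a • x)) := (hL.summable _).hasSum.mul_left _
  have hk : ∀ k : ℕ, |(k ! : ℝ)⁻¹ * expEval (L ∘ₗ LinearMap.mulLeft ℝ ((a • x) ^ k)) (d • x) -
      Real.exp d * ((k ! : ℝ)⁻¹ * L ((a • x) ^ k))| ≤
      ((k ! : ℝ)⁻¹ * a ^ k) * (B * (Real.exp (2 * d) - Real.exp d)) := by
    intro k
    have e1 : HasSum (fun l : ℕ => (l ! : ℝ)⁻¹ * (d ^ l * L (x ^ (k + l))))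
        (expEval (L ∘ₗ LinearMap.mulLeft ℝ (x ^ k)) (d • x)) := by
      convert! ((hL.comp_mulLeft (x ^ k)).summable (d • x)).hasSum using 3 with l
      simp [smul_pow, pow_add]
    have e2 : HasSum (fun l : ℕ => (l ! : ℝ)⁻¹ * d ^ l * L (x ^ k)) (Real.exp d * L (x ^ k)) := by
      rw [← hT d]
      exact (hS d).hasSum.mul_right _
    have e3 : HasSum (fun l : ℕ => B * ((l ! : ℝ)⁻¹ * (2 * d) ^ l - (l ! : ℝ)⁻¹ * d ^ l))
        (B * (Real.exp (2 * d) - Real.exp d)) := by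
      rw [← hT d, ← hT (2 * d)]
      exact ((hS _).hasSum.sub (hS _).hasSum).mul_left _
    have e4 : |expEval (L ∘ₗ LinearMap.mulLeft ℝ (x ^ k)) (d • x) - Real.exp d * L (x ^ k)| ≤
        B * (Real.exp (2 * d) - Real.exp d) := by
      refine (e1.sub e2).norm_le_of_bounded e3 fun l => ?_
      calc ‖(l ! : ℝ)⁻¹ * (d ^ l * L (x ^ (k + l))) - (l ! : ℝ)⁻¹ * d ^ l * L (x ^ k)‖
          = (l ! : ℝ)⁻¹ * d ^ l * |L (x ^ (k + l)) - L (x ^ k)| := by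
            rw [← abs_of_nonneg (show 0 ≤ (l ! : ℝ)⁻¹ * d ^ l by positivity), ← abs_mul,
              Real.norm_eq_abs, abs_of_nonneg (show 0 ≤ (l ! : ℝ)⁻¹ * d ^ l by positivity)]
            ring_nf
        _ ≤ (l ! : ℝ)⁻¹ * d ^ l * (B * (2 ^ l - 1)) := by
            gcongr
            exact abs_sub_le_two_pow_sub_one (f := fun n => L (x ^ n)) hB k l
        _ = _ := by
            rw [mul_pow]
            ring
    have e5 : expEval (L ∘ₗ LinearMap.mulLeft ℝ ((a • x) ^ k)) (d • x) =
        a ^ k * expEval (L ∘ₗ LinearMap.mulLeft ℝ (x ^ k)) (d • x) := by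
      rw [expEval, expEval, ← tsum_mul_left]
      refine tsum_congr fun l => ?_
      simp only [smul_pow, LinearMap.comp_apply, LinearMap.mulLeft_apply, smul_mul_assoc, map_smul,
        smul_eq_mul]
      ring
    rw [e5, smul_pow, map_smul, smul_eq_mul]
    calc _ = |(k ! : ℝ)⁻¹ * a ^ k * (expEval (L ∘ₗ LinearMap.mulLeft ℝ (x ^ k)) (d • x) -
          Real.exp d * L (x ^ k))| := by ring_nf
      _ ≤ _ := by
        rw [abs_mul, abs_of_nonneg (show 0 ≤ (k ! : ℝ)⁻¹ * a ^ k by positivity)]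
        gcongr
  have h3 : |expEval L (a • x + d • x) - Real.exp d * expEval L (a • x)| ≤
      Real.exp a * (B * (Real.exp (2 * d) - Real.exp d)) := by
    refine (h1.sub h2).norm_le_of_bounded (g := fun k : ℕ => ((k ! : ℝ)⁻¹ * a ^ k) *
      (B * (Real.exp (2 * d) - Real.exp d))) ?_ hk
    rw [← hT a]
    exact (hS a).hasSum.mul_right _
  calc _ = |Real.exp (-(a + d)) * (expEval L (a • x + d • x) -
        Real.exp d * expEval L (a • x))| := by
        rw [add_smul, mul_sub, ← mul_assoc, ← Real.exp_add]
        ring_nf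
    _ ≤ Real.exp (-(a + d)) * (Real.exp a * (B * (Real.exp (2 * d) - Real.exp d))) := by
        rw [abs_mul, Real.abs_exp]
        gcongr
    _ = _ := by
        rw [show (2 * d) = d + d by ring, Real.exp_add d d, neg_add, Real.exp_add, Real.exp_neg,
          Real.exp_neg]
        field_simp

end ExponentialSeries

section MonoidAlgebra

variable {M : Type*}

/-- The linear extension of `F : M → ℝ` to the monoid algebra. -/
def evalLin (F : M → ℝ) : AddMonoidAlgebra ℝ M →ₗ[ℝ] ℝ :=
  Finsupp.linearCombination ℝ F ∘ₗ (AddMonoidAlgebra.coeffLinearEquiv ℝ).toLinearMap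

@[simp]
lemma evalLin_single (F : M → ℝ) (h : M) (r : ℝ) :
    evalLin F (AddMonoidAlgebra.single h r) = r * F h := by
  simp [evalLin]

/-- The uniform average of the basis elements indexed by `b`. -/
def unifAvg {ι : Type*} [Fintype ι] (b : ι → M) : AddMonoidAlgebra ℝ M :=
  ∑ t, AddMonoidAlgebra.single (b t) (Fintype.card ι : ℝ)⁻¹

lemma evalLin_unifAvg_pow {ι : Type*} [Fintype ι] [AddCommMonoid M] (F : M → ℝ) (b : ι → M)
    (n : ℕ) : evalLin F (unifAvg b ^ n) =
      (∑ f : Fin n → ι, F (∑ ν, b (f ν))) / (Fintype.card ι : ℝ) ^ n := by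
  simp [unifAvg, Fintype.sum_pow, Finset.mul_sum, div_eq_inv_mul]

lemma evalLin_one_unifAvg_pow {ι : Type*} [Fintype ι] [Nonempty ι] [AddCommMonoid M] (b : ι → M)
    (n : ℕ) : evalLin (fun _ => 1) (unifAvg b ^ n) = 1 := by
  rw [evalLin_unifAvg_pow]
  simp

/-- The sum of the absolute values of the coefficients, weighted by `h ↦ exp (s * ‖h‖)`. -/
def expNorm [SeminormedAddCommGroup M] (s : ℝ) (u : AddMonoidAlgebra ℝ M) : ℝ :=
  u.coeff.sum fun h r => |r| * Real.exp (s * ‖h‖)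

section Seminormed

variable [SeminormedAddCommGroup M]

lemma expNorm_nonneg (s : ℝ) (u : AddMonoidAlgebra ℝ M) : 0 ≤ expNorm s u :=
  Finset.sum_nonneg fun _ _ => by positivity

lemma expNorm_single (s : ℝ) (h : M) (r : ℝ) :
    expNorm s (AddMonoidAlgebra.single h r) = |r| * Real.exp (s * ‖h‖) := by
  simp [expNorm]

lemma expNorm_add_le (s : ℝ) (u v : AddMonoidAlgebra ℝ M) :
    expNorm s (u + v) ≤ expNorm s u + expNorm s v := by
  classical
  have h0 : ∀ i : M, |(0 : ℝ)| * Real.exp (s * ‖i‖) = 0 := by simp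
  rw [expNorm, expNorm, expNorm, AddMonoidAlgebra.coeff_add,
    Finsupp.sum_of_support_subset _ Finsupp.support_add _ (fun i _ => h0 i),
    Finsupp.sum_of_support_subset u.coeff
      (Finset.subset_union_left (s₂ := v.coeff.support)) _ (fun i _ => h0 i),
    Finsupp.sum_of_support_subset v.coeff
      (Finset.subset_union_right (s₁ := u.coeff.support)) _ (fun i _ => h0 i),
    ← Finset.sum_add_distrib]
  refine Finset.sum_le_sum fun h _ => ?_
  rw [← add_mul]
  exact mul_le_mul_of_nonneg_right (abs_add_le _ _) (Real.exp_nonneg _)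

lemma expNorm_sum_le {ι : Type*} (s : ℝ) (t : Finset ι) (f : ι → AddMonoidAlgebra ℝ M) :
    expNorm s (∑ i ∈ t, f i) ≤ ∑ i ∈ t, expNorm s (f i) :=
  Finset.le_sum_of_subadditive (expNorm s) (by simp [expNorm]) (expNorm_add_le s) t f

lemma expNorm_mul_le {s : ℝ} (hs : 0 ≤ s) (u v : AddMonoidAlgebra ℝ M) :
    expNorm s (u * v) ≤ expNorm s u * expNorm s v := by
  rw [AddMonoidAlgebra.mul_def, expNorm.eq_1 s u, expNorm.eq_1 s v, Finsupp.sum, Finsupp.sum,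
    Finset.sum_mul]
  refine (expNorm_sum_le _ _ _).trans (Finset.sum_le_sum fun h _ => ?_)
  rw [Finsupp.sum, Finsupp.sum, Finset.mul_sum]
  refine (expNorm_sum_le _ _ _).trans (Finset.sum_le_sum fun h' _ => ?_)
  rw [expNorm_single, abs_mul, mul_mul_mul_comm, ← Real.exp_add, ← mul_add]
  gcongr
  exact norm_add_le _ _

lemma expNorm_one (s : ℝ) : expNorm s (1 : AddMonoidAlgebra ℝ M) = 1 := by
  simp [AddMonoidAlgebra.one_def, expNorm_single]

lemma abs_map_le_mul_expNorm (L : AddMonoidAlgebra ℝ M →ₗ[ℝ] ℝ) {s K : ℝ}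
    (hL : ∀ h, |L (AddMonoidAlgebra.single h 1)| ≤ K * Real.exp (s * ‖h‖))
    (u : AddMonoidAlgebra ℝ M) : |L u| ≤ K * expNorm s u := by
  conv_lhs => rw [← AddMonoidAlgebra.sum_coeff_single u]
  rw [Finsupp.sum, map_sum, expNorm, Finsupp.sum, Finset.mul_sum]
  refine (Finset.abs_sum_le_sum_abs _ _).trans (Finset.sum_le_sum fun h _ => ?_)
  have : AddMonoidAlgebra.single h (u.coeff h) =
      u.coeff h • AddMonoidAlgebra.single h (1 : ℝ) := by simp
  rw [this, map_smul, smul_eq_mul, abs_mul, mul_left_comm]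
  exact mul_le_mul_of_nonneg_left (hL h) (abs_nonneg _)

lemma isDominated_evalLin {F : M → ℝ} {K : ℝ} (hF : ∀ h, |F h| ≤ K * Real.exp ‖h‖) :
    IsDominated (evalLin F) := by
  have hK : 0 ≤ K := by
    have := (abs_nonneg _).trans (hF 0)
    simpa using this
  refine ⟨expNorm 1, K, expNorm_nonneg 1, (expNorm_one 1).le, expNorm_mul_le zero_le_one, hK,
    abs_map_le_mul_expNorm _ fun h => ?_⟩
  simpa using hF h

lemma expNorm_zero_unifAvg_pow_le {ι : Type*} [Fintype ι] [Nonempty ι] (b : ι → M) (n : ℕ) :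
    expNorm 0 (unifAvg b ^ n) ≤ 1 := by
  induction n with
  | zero => simp [expNorm_one]
  | succ n ih =>
    rw [pow_succ]
    refine (expNorm_mul_le le_rfl _ _).trans (mul_le_one₀ ih (expNorm_nonneg _ _) ?_)
    refine (expNorm_sum_le _ _ _).trans ?_
    simp [expNorm_single]

lemma abs_evalLin_unifAvg_pow_succ_sub_le {ι : Type*} [Fintype ι] [Nonempty ι] {F : M → ℝ}
    {b : ι → M} {B : ℝ} (hB : ∀ t h, |F (b t + h) - F h| ≤ B) (n : ℕ) :
    |evalLin F (unifAvg b ^ (n + 1)) - evalLin F (unifAvg b ^ n)| ≤ B := by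
  have hB0 : 0 ≤ B := (abs_nonneg _).trans (hB (Classical.arbitrary ι) 0)
  have hc : (Fintype.card ι : ℝ) ≠ 0 := by simp
  have h := abs_map_le_mul_expNorm
    (evalLin F ∘ₗ LinearMap.mulLeft ℝ (unifAvg b) - evalLin F) (s := 0) (K := B) ?_
    (unifAvg b ^ n)
  · rw [pow_succ']
    refine h.trans ?_
    simpa using mul_le_mul_of_nonneg_left (expNorm_zero_unifAvg_pow_le b n) hB0
  · intro h
    have : (evalLin F ∘ₗ LinearMap.mulLeft ℝ (unifAvg b) - evalLin F)
        (AddMonoidAlgebra.single h 1) =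
        ∑ t, (Fintype.card ι : ℝ)⁻¹ * (F (b t + h) - F h) := by
      simp [unifAvg, Finset.sum_mul, AddMonoidAlgebra.single_mul_single, mul_sub, hc]
    rw [this, zero_mul, Real.exp_zero, mul_one]
    refine (Finset.abs_sum_le_sum_abs _ _).trans ?_
    calc _ ≤ ∑ t : ι, (Fintype.card ι : ℝ)⁻¹ * B := by
          refine Finset.sum_le_sum fun t _ => ?_
          rw [abs_mul, abs_of_nonneg (by positivity)]
          gcongr
          exact hB t h
      _ = B := by simp [hc]

end Seminormed

lemma quenchedAvg_eq_expEval [AddCommMonoid M] (N : ℕ) (lam : ℝ) (H : M → ℝ)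
    (b : Fin N × Fin N × Bool → M) :
    quenchedAvg N lam (fun p i j J => H (∑ ν : Fin p, b (i ν, j ν, J ν))) =
      Real.exp (-lam) * expEval (evalLin H) (lam • unifAvg b) := by
  rw [quenchedAvg, expEval, ← tsum_mul_left]
  refine tsum_congr fun p => ?_
  rw [smul_pow, map_smul, evalLin_unifAvg_pow, smul_eq_mul]
  have : ∑ f : Fin p → Fin N × Fin N × Bool, H (∑ ν, b (f ν)) =
      ∑ i : Fin p → Fin N, ∑ j : Fin p → Fin N, ∑ J : Fin p → Bool,
        H (∑ ν : Fin p, b (i ν, j ν, J ν)) := by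
    simp_rw [← Fintype.sum_prod_type']
    exact Fintype.sum_equiv ((Equiv.arrowProdEquivProdArrow _ _ _).trans
      (Equiv.prodCongr (Equiv.refl _) (Equiv.arrowProdEquivProdArrow _ _ _))) _ _ fun f => rfl
  rw [this]
  simp only [Fintype.card_prod, Fintype.card_fin, Fintype.card_bool, Nat.cast_mul, mul_pow,
    Nat.cast_ofNat]
  ring

lemma cavityAvg_eq_expEval [AddCommMonoid M] (N : ℕ) (lam : ℝ) (H : M → ℝ)
    (c : Fin N × Bool → M) :
    cavityAvg N lam (fun q k J => H (∑ ν : Fin q, c (k ν, J ν))) =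
      Real.exp (-lam) * expEval (evalLin H) (lam • unifAvg c) := by
  rw [cavityAvg, expEval, ← tsum_mul_left]
  refine tsum_congr fun q => ?_
  rw [smul_pow, map_smul, evalLin_unifAvg_pow, smul_eq_mul]
  have : ∑ f : Fin q → Fin N × Bool, H (∑ ν, c (f ν)) =
      ∑ k : Fin q → Fin N, ∑ J : Fin q → Bool, H (∑ ν : Fin q, c (k ν, J ν)) := by
    simp_rw [← Fintype.sum_prod_type']
    exact Fintype.sum_equiv (Equiv.arrowProdEquivProdArrow _ _ _) _ _ fun f => rfl
  rw [this]
  simp only [Fintype.card_prod, Fintype.card_fin, Fintype.card_bool, Nat.cast_mul, mul_pow,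
    Nat.cast_ofNat]
  ring

end MonoidAlgebra

section Model

/-- The contribution of one bond to `-β H`. -/
def bond (N : ℕ) (β : ℝ) (t : Fin N × Fin N × Bool) : (Fin N → Bool) → ℝ :=
  fun σ => β * (spin t.2.2 * spin (σ t.1) * spin (σ t.2.1))

/-- The contribution of one term to the cavity field. -/
def cavityBond (N : ℕ) (β : ℝ) (t : Fin N × Bool) : (Fin N → Bool) → ℝ :=
  fun σ => β * (spin t.2 * spin (σ t.1))

/-- The logarithm of the partition function of the energy function `-h`. -/
def logZ (N : ℕ) (h : (Fin N → Bool) → ℝ) : ℝ := Real.log (∑ σ, Real.exp (h σ))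

lemma sum_bond (N p : ℕ) (β : ℝ) (i j : Fin p → Fin N) (J : Fin p → Bool) :
    ∑ ν, bond N β (i ν, j ν, J ν) = negBetaH N p β i j J := by
  funext σ
  simp [bond, negBetaH, Finset.mul_sum, Finset.sum_apply]

lemma sum_cavityBond (N q : ℕ) (β : ℝ) (k : Fin q → Fin N) (J : Fin q → Bool) :
    ∑ ν, cavityBond N β (k ν, J ν) = cavityField N q β k J := by
  funext σ
  simp [cavityBond, cavityField, Finset.mul_sum, Finset.sum_apply]

lemma abs_spin (b : Bool) : |spin b| = 1 := by cases b <;> simp [spin]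

lemma spin_not (b : Bool) : spin (!b) = -spin b := by cases b <;> simp [spin]

lemma norm_bond_le (N : ℕ) {β : ℝ} (hβ : 0 ≤ β) (t : Fin N × Fin N × Bool) :
    ‖bond N β t‖ ≤ β := by
  refine (pi_norm_le_iff_of_nonneg hβ).2 fun σ => ?_
  simp [bond, abs_spin, abs_of_nonneg hβ]

lemma sum_exp_pos (N : ℕ) (h : (Fin N → Bool) → ℝ) : 0 < ∑ σ, Real.exp (h σ) :=
  Finset.sum_pos (fun _ _ => Real.exp_pos _) Finset.univ_nonempty

lemma logZ_add_le (N : ℕ) (g h : (Fin N → Bool) → ℝ) : logZ N (g + h) ≤ ‖g‖ + logZ N h := by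
  rw [logZ, logZ, ← Real.log_exp ‖g‖, ← Real.log_mul (Real.exp_ne_zero _) (sum_exp_pos N h).ne']
  refine Real.log_le_log (sum_exp_pos N _) ?_
  rw [Finset.mul_sum]
  refine Finset.sum_le_sum fun σ _ => ?_
  rw [← Real.exp_add, Pi.add_apply]
  gcongr
  exact (le_abs_self _).trans (norm_le_pi_norm g σ)

lemma abs_logZ_add_sub_le (N : ℕ) (g h : (Fin N → Bool) → ℝ) :
    |logZ N (g + h) - logZ N h| ≤ ‖g‖ := by
  have h1 := logZ_add_le N g h
  have h2 := logZ_add_le N (-g) (g + h)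
  rw [neg_add_cancel_left, norm_neg] at h2
  rw [abs_le]
  constructor <;> linarith

lemma isDominated_logZ (N : ℕ) : IsDominated (evalLin (logZ N)) := by
  refine isDominated_evalLin (K := |logZ N 0| + 1) fun h => ?_
  have h1 := abs_logZ_add_sub_le N h 0
  rw [add_zero] at h1
  have h2 := abs_sub_abs_le_abs_sub (logZ N h) (logZ N 0)
  have h3 := Real.add_one_le_exp ‖h‖
  nlinarith [abs_nonneg (logZ N 0), norm_nonneg h]

lemma natCast_mul_pressure {N : ℕ} (hN : N ≠ 0) (β a : ℝ) :
    (N : ℝ) * pressure N β a =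
      quenchedAvg N (a * N) fun p i j J => logZ N (negBetaH N p β i j J) := by
  have : (N : ℝ) ≠ 0 := by exact_mod_cast hN
  rw [pressure, quenchedAvg, quenchedAvg, ← tsum_mul_left]
  refine tsum_congr fun p => ?_
  simp_rw [← Finset.mul_sum]
  change _ * (_ * ((1 / (N : ℝ) * ∑ i, ∑ j, ∑ J, logZ N (negBetaH N p β i j J)) / _)) = _
  field_simp

lemma natCast_mul_pressure_eq_expEval {N : ℕ} (hN : N ≠ 0) (β a : ℝ) :
    (N : ℝ) * pressure N β a = Real.exp (-(a * N)) *
      expEval (evalLin (logZ N)) ((a * N) • unifAvg (bond N β)) := by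
  rw [natCast_mul_pressure hN, ← quenchedAvg_eq_expEval]
  simp_rw [sum_bond]

lemma abs_natCast_mul_pressure_sub_le {N : ℕ} (hN : N ≠ 0) {β a d : ℝ} (hβ : 0 ≤ β) (ha : 0 ≤ a)
    (hd : 0 ≤ d) : |(N : ℝ) * pressure N β (a + d) - N * pressure N β a| ≤
      β * (Real.exp (d * N) - 1) := by
  have : Nonempty (Fin N) := Fin.pos_iff_nonempty.1 (Nat.pos_of_ne_zero hN)
  rw [natCast_mul_pressure_eq_expEval hN, natCast_mul_pressure_eq_expEval hN, add_mul]
  exact (isDominated_logZ N).abs_exp_mul_expEval_sub_le _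
    (abs_evalLin_unifAvg_pow_succ_sub_le fun t h =>
      (abs_logZ_add_sub_le N _ _).trans (norm_bond_le N hβ t)) (by positivity) (by positivity)

/-- A bond of the system with `N + 1` spins, whose first spin is frozen to `1`. -/
def frozenBond (N : ℕ) (β : ℝ) (t : Fin (N + 1) × Fin (N + 1) × Bool) : (Fin N → Bool) → ℝ :=
  fun σ => bond (N + 1) β t (Fin.cons true σ)

lemma negBetaH_not (N p : ℕ) (β : ℝ) (i j : Fin p → Fin N) (J : Fin p → Bool)
    (σ : Fin N → Bool) : negBetaH N p β i j J (fun x => !σ x) = negBetaH N p β i j J σ := by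
  simp [negBetaH, spin_not]

lemma logZ_succ_negBetaH (N p : ℕ) (β : ℝ) (i j : Fin p → Fin (N + 1)) (J : Fin p → Bool) :
    logZ (N + 1) (negBetaH (N + 1) p β i j J) =
      Real.log 2 + logZ N (∑ ν, frozenBond N β (i ν, j ν, J ν)) := by
  set G := negBetaH (N + 1) p β i j J with hG
  have h1 : ∑ ν, frozenBond N β (i ν, j ν, J ν) = fun τ => G (Fin.cons true τ) := by
    funext τ
    rw [hG, ← sum_bond]
    simp [frozenBond, Finset.sum_apply]
  have h2 : ∑ τ : Fin N → Bool, Real.exp (G (Fin.cons false τ)) =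
      ∑ τ : Fin N → Bool, Real.exp (G (Fin.cons true τ)) := by
    refine Fintype.sum_equiv (Equiv.arrowCongr (Equiv.refl _) Equiv.boolNot) _ _ fun τ => ?_
    rw [hG, ← negBetaH_not]
    congr 2
    funext x
    refine Fin.cases ?_ (fun y => ?_) x <;> simp
  have h3 : ∑ σ, Real.exp (G σ) = 2 * ∑ τ : Fin N → Bool, Real.exp (G (Fin.cons true τ)) := by
    rw [← (Fin.consEquiv fun _ : Fin (N + 1) => Bool).sum_comp, Fintype.sum_prod_type,
      Fintype.sum_bool]
    change ∑ τ : Fin N → Bool, Real.exp (G (Fin.cons true τ)) +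
      ∑ τ : Fin N → Bool, Real.exp (G (Fin.cons false τ)) = _
    rw [h2, two_mul]
  rw [h1, logZ, logZ, h3, Real.log_mul two_ne_zero (sum_exp_pos N _).ne']

lemma succ_mul_pressure_eq_expEval (N : ℕ) (β a : ℝ) :
    ((N : ℝ) + 1) * pressure (N + 1) β a = Real.log 2 + Real.exp (-(a * (N + 1))) *
      expEval (evalLin (logZ N)) ((a * (N + 1)) • unifAvg (frozenBond N β)) := by
  have h := natCast_mul_pressure N.succ_ne_zero β a
  simp only [Nat.succ_eq_add_one, logZ_succ_negBetaH, Nat.cast_add, Nat.cast_one] at h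
  rw [h, quenchedAvg_eq_expEval (H := fun h => Real.log 2 + logZ N h) (b := frozenBond N β)]
  have h1 : ∀ u, evalLin (fun h => Real.log 2 + logZ N h) u =
      Real.log 2 * evalLin (fun _ => 1) u + evalLin (logZ N) u := by
    intro u
    induction u using AddMonoidAlgebra.induction_linear with
    | zero => simp
    | add u v hu hv =>
      simp only [map_add, hu, hv]
      ring
    | single h r =>
      simp only [evalLin_single]
      ring
  have h2 : expEval (evalLin fun h => Real.log 2 + logZ N h)
      ((a * (N + 1)) • unifAvg (frozenBond N β)) = Real.exp (a * (N + 1)) * Real.log 2 +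
        expEval (evalLin (logZ N)) ((a * (N + 1)) • unifAvg (frozenBond N β)) := by
    rw [← tsum_inv_factorial_mul_pow, ← tsum_mul_right, expEval, expEval,
      ← ((summable_inv_factorial_mul_pow _).mul_right _).tsum_add ((isDominated_logZ N).summable _)]
    refine tsum_congr fun n => ?_
    rw [h1, smul_pow, map_smul, evalLin_one_unifAvg_pow, smul_eq_mul]
    ring
  rw [h2, mul_add, ← mul_assoc, ← Real.exp_add]
  simp

/-- A bond that joins the frozen spin to itself. -/
def loopBond (N : ℕ) (β : ℝ) (J : Bool) : (Fin N → Bool) → ℝ := fun _ => β * spin J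

lemma logZ_add_loopBond (N : ℕ) (β : ℝ) (J : Bool) (h : (Fin N → Bool) → ℝ) :
    logZ N (h + loopBond N β J) = logZ N h + β * spin J := by
  simp only [logZ, loopBond, Pi.add_apply, Real.exp_add]
  rw [← Finset.sum_mul, Real.log_mul (sum_exp_pos N h).ne' (Real.exp_ne_zero _), Real.log_exp]

lemma evalLin_logZ_mul_unifAvg_loopBond (N : ℕ) (β : ℝ)
    (u : AddMonoidAlgebra ℝ ((Fin N → Bool) → ℝ)) :
    evalLin (logZ N) (u * unifAvg (loopBond N β)) = evalLin (logZ N) u := by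
  induction u using AddMonoidAlgebra.induction_linear with
  | zero => simp
  | add u v hu hv => rw [add_mul, map_add, map_add, hu, hv]
  | single h r =>
    simp [unifAvg, mul_add, AddMonoidAlgebra.single_mul_single, logZ_add_loopBond, spin]
    ring

lemma smul_unifAvg_frozenBond {N : ℕ} (hN : N ≠ 0) (β α : ℝ) :
    (α * (1 + 1 / N) * (N + 1)) • unifAvg (frozenBond N β) =
      (α * N) • unifAvg (bond N β) + (2 * α) • unifAvg (cavityBond N β) +
        (α / N) • unifAvg (loopBond N β) := by
  have hN' : (N : ℝ) ≠ 0 := by exact_mod_cast hN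
  have hN1 : (N : ℝ) + 1 ≠ 0 := by positivity
  have e1 : α * (1 + 1 / N) * (N + 1) * (Fintype.card (Fin (N + 1) × Fin (N + 1) × Bool) : ℝ)⁻¹ =
      α / (2 * N) := by
    simp
    field_simp
  have e2 : α * N * (Fintype.card (Fin N × Fin N × Bool) : ℝ)⁻¹ = α / (2 * N) := by
    simp
    field_simp
  have e3 : 2 * α * (Fintype.card (Fin N × Bool) : ℝ)⁻¹ = α / (2 * N) + α / (2 * N) := by
    simp
    field_simp
    ring
  have e4 : α / N * (Fintype.card Bool : ℝ)⁻¹ = α / (2 * N) := by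
    simp
    field_simp
  simp only [unifAvg, Finset.smul_sum, AddMonoidAlgebra.smul_single', e1, e2, e3, e4]
  have f1 : ∀ J, frozenBond N β (0, 0, J) = loopBond N β J := by
    intro J
    funext σ
    simp [frozenBond, bond, loopBond, spin]
  have f2 : ∀ k J, frozenBond N β (0, Fin.succ k, J) = cavityBond N β (k, J) := by
    intro k J
    funext σ
    simp [frozenBond, bond, cavityBond, spin]
  have f3 : ∀ k J, frozenBond N β (Fin.succ k, 0, J) = cavityBond N β (k, J) := by
    intro k J
    funext σ
    simp [frozenBond, bond, cavityBond, spin]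
  have f4 : ∀ k l J, frozenBond N β (Fin.succ k, Fin.succ l, J) = bond N β (k, l, J) := by
    intro k l J
    funext σ
    simp [frozenBond, bond]
  simp only [Fintype.sum_prod_type, Fin.sum_univ_succ, f1, f2, f3, f4, AddMonoidAlgebra.single_add,
    Finset.sum_add_distrib]
  abel

lemma cavityAvg_log_eq_expEval {N : ℕ} (hN : N ≠ 0) (β a : ℝ) (h : (Fin N → Bool) → ℝ) :
    (cavityAvg N (2 * a) fun q k J =>
      Real.log ((∑ σ, Real.exp (h σ + cavityField N q β k J σ)) / ∑ σ, Real.exp (h σ))) =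
      Real.exp (-(2 * a)) * expEval (evalLin (logZ N) ∘ₗ
        LinearMap.mulLeft ℝ (AddMonoidAlgebra.single h 1)) ((2 * a) • unifAvg (cavityBond N β)) -
        logZ N h := by
  have : Nonempty (Fin N) := Fin.pos_iff_nonempty.1 (Nat.pos_of_ne_zero hN)
  have h0 : ∀ q (k : Fin q → Fin N) (J : Fin q → Bool),
      Real.log ((∑ σ, Real.exp (h σ + cavityField N q β k J σ)) / ∑ σ, Real.exp (h σ)) =
        logZ N (h + ∑ ν, cavityBond N β (k ν, J ν)) - logZ N h := by
    intro q k J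
    rw [Real.log_div (sum_exp_pos N fun σ => h σ + cavityField N q β k J σ).ne'
      (sum_exp_pos N h).ne', sum_cavityBond]
    rfl
  simp only [h0]
  rw [cavityAvg_eq_expEval (H := fun c => logZ N (h + c) - logZ N h)]
  have h1 : ∀ u, evalLin (fun c => logZ N (h + c) - logZ N h) u =
      evalLin (logZ N) (AddMonoidAlgebra.single h 1 * u) -
        logZ N h * evalLin (fun _ => 1) u := by
    intro u
    induction u using AddMonoidAlgebra.induction_linear with
    | zero => simp
    | add u v hu hv =>
      simp only [mul_add, map_add, hu, hv]
      ring
    | single c r =>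
      simp only [evalLin_single, AddMonoidAlgebra.single_mul_single]
      ring
  have h2 : expEval (evalLin fun c => logZ N (h + c) - logZ N h)
      ((2 * a) • unifAvg (cavityBond N β)) = expEval (evalLin (logZ N) ∘ₗ
        LinearMap.mulLeft ℝ (AddMonoidAlgebra.single h 1)) ((2 * a) • unifAvg (cavityBond N β)) -
        Real.exp (2 * a) * logZ N h := by
    rw [← tsum_inv_factorial_mul_pow, ← tsum_mul_right, expEval, expEval,
      ← (((isDominated_logZ N).comp_mulLeft _).summable _).tsum_sub
        ((summable_inv_factorial_mul_pow _).mul_right _)]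
    refine tsum_congr fun n => ?_
    rw [h1, LinearMap.comp_apply, LinearMap.mulLeft_apply, smul_pow, map_smul,
      evalLin_one_unifAvg_pow, smul_eq_mul]
    ring
  rw [h2, mul_sub, ← mul_assoc, ← Real.exp_add]
  simp

lemma cavityFun_eq_expEval {N : ℕ} (hN : N ≠ 0) (β a α : ℝ) :
    cavityFun N β a α = Real.exp (-(α * N)) * (Real.exp (-(2 * a)) * expEval (evalLin (logZ N))
      ((α * N) • unifAvg (bond N β) + (2 * a) • unifAvg (cavityBond N β)) -
        expEval (evalLin (logZ N)) ((α * N) • unifAvg (bond N β))) := by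
  set v := (2 * a) • unifAvg (cavityBond N β)
  set x := (α * N) • unifAvg (bond N β) with hx
  set H : ((Fin N → Bool) → ℝ) → ℝ := fun h => Real.exp (-(2 * a)) * expEval (evalLin (logZ N) ∘ₗ
        LinearMap.mulLeft ℝ (AddMonoidAlgebra.single h 1)) v - logZ N h with hH
  have hD := isDominated_logZ N
  have h0 : cavityFun N β a α = quenchedAvg N (α * N)
      fun p i j J => H (∑ ν, bond N β (i ν, j ν, J ν)) := by
    simp_rw [hH, sum_bond, v, ← cavityAvg_log_eq_expEval hN]
    rfl
  have h1 : ∀ u, evalLin H u = Real.exp (-(2 * a)) *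
      expEval (evalLin (logZ N) ∘ₗ LinearMap.mulLeft ℝ u) v - evalLin (logZ N) u := by
    intro u
    induction u using AddMonoidAlgebra.induction_linear with
    | zero => simp [expEval]
    | add u w hu hw =>
      have : expEval (evalLin (logZ N) ∘ₗ LinearMap.mulLeft ℝ (u + w)) v =
          expEval (evalLin (logZ N) ∘ₗ LinearMap.mulLeft ℝ u) v +
            expEval (evalLin (logZ N) ∘ₗ LinearMap.mulLeft ℝ w) v := by
        rw [expEval, expEval, expEval,
          ← ((hD.comp_mulLeft u).summable v).tsum_add ((hD.comp_mulLeft w).summable v)]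
        refine tsum_congr fun n => ?_
        simp [add_mul, mul_add]
      rw [map_add, map_add, hu, hw, this]
      ring
    | single h r =>
      have : expEval (evalLin (logZ N) ∘ₗ LinearMap.mulLeft ℝ (AddMonoidAlgebra.single h r)) v =
          r * expEval (evalLin (logZ N) ∘ₗ
            LinearMap.mulLeft ℝ (AddMonoidAlgebra.single h 1)) v := by
        rw [expEval, expEval, ← tsum_mul_left]
        refine tsum_congr fun n => ?_
        have : AddMonoidAlgebra.single h r = r • AddMonoidAlgebra.single h (1 : ℝ) := by simp
        simp only [this, LinearMap.comp_apply, LinearMap.mulLeft_apply, smul_mul_assoc, map_smul,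
          smul_eq_mul]
        ring
      rw [evalLin_single, evalLin_single, this, hH]
      ring
  rw [h0, quenchedAvg_eq_expEval, ← hx, expEval]
  have hs := hD.hasSum_expEval_add x v
  have h2 := (hs.mul_left (Real.exp (-(2 * a)))).sub (hD.summable x).hasSum
  refine congrArg (Real.exp (-(α * N)) * ·) (Eq.trans ?_ h2.tsum_eq)
  refine tsum_congr fun n => ?_
  rw [h1]
  ring

lemma succ_mul_pressure_sub_eq {N : ℕ} (hN : N ≠ 0) (β α : ℝ) :
    ((N : ℝ) + 1) * pressure (N + 1) β (α * (1 + 1 / N)) - N * pressure N β α =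
      Real.log 2 + cavityFun N β α α := by
  have hN' : (N : ℝ) ≠ 0 := by exact_mod_cast hN
  rw [succ_mul_pressure_eq_expEval, smul_unifAvg_frozenBond hN,
    (isDominated_logZ N).expEval_add_smul_of_forall_mul_eq _ _
      (evalLin_logZ_mul_unifAvg_loopBond N β), natCast_mul_pressure_eq_expEval hN,
    cavityFun_eq_expEval hN, mul_sub, ← mul_assoc, ← mul_assoc, ← Real.exp_add, ← Real.exp_add]
  have : -(α * (1 + 1 / N) * (N + 1)) + α / N = -(α * N) + -(2 * α) := by
    field_simp
    ring
  rw [this]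
  ring

end Model

/-- In the thermodynamic limit the quenched pressure of the Viana–Bray model
satisfies `A(α) = ln 2 + ψ(α,α) - α A'(α)`.  Precisely: fix `β > 0` and `α > 0` and
assume (i) `A(α') = lim_N A_N(α')` exists for all `α'` near `α` and `A` has derivative
`A'` at `α`; (ii) `N (A_N(α(1+1/N)) - A_N(α)) → α A'`; (iii) `ψ(α', α) = lim_N ψ_N(α', α)`
exists for `α'` near `α` and is continuous in `α'` at `α`.  Then
`A α = ln 2 + ψ(α, α) - α A'`. -/
theorem pressure_cavity_representation (β α : ℝ) (hβ : 0 < β) (hα : 0 < α)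
    (A : ℝ → ℝ) (A' : ℝ) (ψ : ℝ → ℝ)
    (hAlim : ∀ᶠ α' in nhds α,
      Filter.Tendsto (fun N : ℕ => pressure N β α') Filter.atTop (nhds (A α')))
    (hAdiff : HasDerivAt A A' α)
    (hAderivlim : Filter.Tendsto
      (fun N : ℕ => (N : ℝ) * (pressure N β (α * (1 + 1 / N)) - pressure N β α))
      Filter.atTop (nhds (α * A')))
    (hψlim : ∀ᶠ α' in nhds α,
      Filter.Tendsto (fun N : ℕ => cavityFun N β α' α) Filter.atTop (nhds (ψ α')))
    (hψcont : ContinuousAt ψ α) :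
    A α = Real.log 2 + ψ α - α * A' := by
  set a : ℕ → ℝ := fun N => N * pressure N β α with ha
  have hA : Filter.Tendsto (fun N : ℕ => pressure N β α) Filter.atTop (nhds (A α)) :=
    hAlim.self_of_nhds
  have hψ : Filter.Tendsto (fun N : ℕ => cavityFun N β α α) Filter.atTop (nhds (ψ α)) :=
    hψlim.self_of_nhds
  set r : ℕ → ℝ := fun N => ((N : ℝ) + 1) * pressure (N + 1) β (α * (1 + 1 / N)) -
    ((N : ℝ) + 1) * pressure (N + 1) β (α * (1 + 1 / ((N : ℝ) + 1))) with hr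
  have hr0 : Filter.Tendsto r Filter.atTop (nhds 0) := by
    have h1 : Filter.Tendsto (fun N : ℕ => β * (Real.exp (α / N) - 1)) Filter.atTop (nhds 0) := by
      have h2 : Filter.Tendsto (fun N : ℕ => β * (Real.exp (α / N) - 1)) Filter.atTop
          (nhds (β * (Real.exp 0 - 1))) :=
        (((Real.continuous_exp.tendsto 0).comp
          (tendsto_const_div_atTop_nhds_zero_nat α)).sub_const 1).const_mul β
      simpa using h2
    refine squeeze_zero_norm' ?_ h1
    filter_upwards [Filter.eventually_ne_atTop 0] with N hN
    have hN' : (0 : ℝ) < N := by exact_mod_cast Nat.pos_of_ne_zero hN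
    have h3 := abs_natCast_mul_pressure_sub_le N.succ_ne_zero hβ.le
      (a := α * (1 + 1 / ((N : ℝ) + 1))) (d := α / (N * (N + 1))) (by positivity) (by positivity)
    have e1 : α * (1 + 1 / ((N : ℝ) + 1)) + α / (N * (N + 1)) = α * (1 + 1 / N) := by
      field_simp
      ring
    have e2 : α / (N * (N + 1)) * ((N : ℝ) + 1) = α / N := by
      field_simp
    simpa only [hr, Real.norm_eq_abs, e1, e2, Nat.succ_eq_add_one, Nat.cast_add,
      Nat.cast_one] using h3
  have hstep : Filter.Tendsto (fun N => a (N + 1) - a N) Filter.atTop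
      (nhds (Real.log 2 + ψ α - α * A' - 0)) := by
    have h1 := hAderivlim.comp (Filter.tendsto_add_atTop_nat 1)
    refine (((hψ.const_add (Real.log 2)).sub h1).sub hr0).congr' ?_
    filter_upwards [Filter.eventually_ne_atTop 0] with N hN
    rw [← succ_mul_pressure_sub_eq hN]
    simp only [ha, hr, Function.comp_apply, Nat.cast_add, Nat.cast_one]
    ring
  rw [sub_zero] at hstep
  refine tendsto_nhds_unique (hA.congr' ?_) hstep.cesaro
  filter_upwards [Filter.eventually_ne_atTop 0] with N hN
  have hN' : (N : ℝ) ≠ 0 := by exact_mod_cast hN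
  rw [Finset.sum_range_sub]
  simp [ha, hN']

end
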